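/- arXiv:2209.02456 — 2 statements merged into one kernel-verified Lean document; each statement's English description precedes it below -/
import Mathlib

section
/- Let K ⊆ ℝ^N be a compact set and let φ : ℝ → ℝ be a continuous function that is discriminatory for K. Then for every continuous function f : K → ℝ and every ε > 0 there exist M ∈ ℕ, α_1,…,α_M ∈ ℝ, θ_1,…,θ_M ∈ ℝ, and y_1,…,y_M ∈ ℝ^N such that |f(x) − Σ_{i=1}^M α_i φ(y_iᵀ x + θ_i)| < ε for all x ∈ K; that is, the class of single-hidden-layer real-valued neural networks with activation φ is dense in C(K) with respect to the supremum norm. -/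
/-!
If the span of the ridge functions `x ↦ φ (y ⬝ᵥ x + θ)` were not dense in `C(K, ℝ)`, Hahn–Banach
would give a nonzero continuous functional `L` vanishing on it. By Riesz representation `L` is
integration against a signed measure, which is zero because `φ` is discriminatory; so `L = 0`, a
contradiction.

The Riesz–Markov–Kakutani theorem represents positive functionals only, so `L` has to be written as
a difference of two of them. In any normed lattice `E` this is a second use of Hahn–Banach, on
`E × E`: the functional `(u, -u) ↦ L u` on the antidiagonal is at most `2 * ‖L‖ * ‖(u, -u)⁺‖`, and
an extension of it dominated by `2 * ‖L‖ * ‖·⁺‖` is nonnegative on pairs of nonnegative elements.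
-/

open Matrix MeasureTheory

/-- A function `φ : ℝ → ℝ` is discriminatory for `K ⊆ ℝ^N` if for every finite
signed regular Borel measure `μ` on `K`, `∫_K φ(yᵀx + θ) dμ(x) = 0` for all
`y ∈ ℝ^N` and `θ ∈ ℝ` implies `μ = 0`. The integral against the signed measure
is expressed via its Jordan decomposition. -/
def Discriminatory {N : ℕ} (φ : ℝ → ℝ) (K : Set (Fin N → ℝ)) : Prop :=
  ∀ μ : SignedMeasure K,
    μ.toJordanDecomposition.posPart.Regular →
    μ.toJordanDecomposition.negPart.Regular →
    (∀ (y : Fin N → ℝ) (θ : ℝ),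
      (∫ x : K, φ (y ⬝ᵥ (x : Fin N → ℝ) + θ) ∂μ.toJordanDecomposition.posPart) -
      (∫ x : K, φ (y ⬝ᵥ (x : Fin N → ℝ) + θ) ∂μ.toJordanDecomposition.negPart) = 0) →
    μ = 0

section NormedLattice

variable {E : Type*} [NormedAddCommGroup E] [Lattice E]

lemma norm_posPart_smul [NormedSpace ℝ E] [PosSMulMono ℝ E] {c : ℝ} (hc : 0 < c) (u : E) :
    ‖(c • u)⁺‖ = c * ‖u⁺‖ := by
  have posPart_smul : c • u⁺ = (c • u)⁺ :=
    ((OrderIso.smulRight hc).map_sup u 0).trans (congrArg (c • u ⊔ ·) (smul_zero c))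
  rw [← posPart_smul, norm_smul, Real.norm_of_nonneg hc.le]

variable [IsOrderedAddMonoid E]

lemma norm_le_two_mul_norm_posPart_prodMk_neg (u : E) : ‖u‖ ≤ 2 * ‖(u, -u)⁺‖ :=
  calc ‖u‖ = ‖u⁺ - (-u)⁺‖ := by rw [posPart_neg, posPart_sub_negPart]
    _ ≤ ‖u⁺‖ + ‖(-u)⁺‖ := norm_sub_le _ _
    _ ≤ ‖(u, -u)⁺‖ + ‖(u, -u)⁺‖ := add_le_add (norm_fst_le (u, -u)⁺) (norm_snd_le (u, -u)⁺)
    _ = 2 * ‖(u, -u)⁺‖ := (two_mul _).symm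

instance {E F : Type*} [NormedAddCommGroup E] [Lattice E] [HasSolidNorm E]
    [NormedAddCommGroup F] [Lattice F] [HasSolidNorm F] : HasSolidNorm (E × F) where
  solid _ _ h := max_le_max (norm_le_norm_of_abs_le_abs h.1) (norm_le_norm_of_abs_le_abs h.2)

variable [HasSolidNorm E]

instance {X : Type*} [TopologicalSpace X] [CompactSpace X] : HasSolidNorm C(X, E) where
  solid _ g h := (ContinuousMap.norm_le _ (norm_nonneg g)).2 fun x =>
    (norm_le_norm_of_abs_le_abs (h x)).trans (g.norm_coe_le_norm x)

lemma norm_le_norm_of_nonneg_of_le {u v : E} (hu : 0 ≤ u) (huv : u ≤ v) : ‖u‖ ≤ ‖v‖ :=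
  norm_le_norm_of_abs_le_abs (abs_le_abs_of_nonneg hu huv)

lemma norm_posPart_add_le (u v : E) : ‖(u + v)⁺‖ ≤ ‖u⁺‖ + ‖v⁺‖ :=
  have posPart_add_le : (u + v)⁺ ≤ u⁺ + v⁺ :=
    sup_le (add_le_add (le_posPart u) (le_posPart v))
      (add_nonneg (posPart_nonneg u) (posPart_nonneg v))
  (norm_le_norm_of_nonneg_of_le (posPart_nonneg _) posPart_add_le).trans (norm_add_le _ _)

variable [NormedSpace ℝ E] [PosSMulMono ℝ E]

lemma exists_positive_extension_of_le_mul_norm_posPart (f : E →ₗ.[ℝ] ℝ) {C : ℝ} (hC : 0 ≤ C)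
    (hf : ∀ u : f.domain, f u ≤ C * ‖(u : E)⁺‖) :
    ∃ P : E →ₚ[ℝ] ℝ, ∀ u : f.domain, P u = f u := by
  obtain ⟨P, hPf, hPC⟩ := exists_extension_of_le_sublinear f (fun u => C * ‖u⁺‖)
    (fun c hc u => by rw [norm_posPart_smul hc, mul_left_comm])
    (fun u v => by
      rw [← mul_add]
      exact mul_le_mul_of_nonneg_left (norm_posPart_add_le u v) hC)
    hf
  have P_nonneg (u : E) (hu : 0 ≤ u) : 0 ≤ P u := by
    simpa [posPart_of_nonpos (neg_nonpos.2 hu)] using hPC (-u)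
  exact ⟨.mk₀ P P_nonneg, hPf⟩

lemma exists_positive_sub_positive (L : StrongDual ℝ E) :
    ∃ P Q : E →ₚ[ℝ] ℝ, ∀ u, L u = P u - Q u := by
  let f : E × E →ₗ.[ℝ] ℝ :=
    { domain := (-LinearMap.id : E →ₗ[ℝ] E).graph
      toFun := L.toLinearMap ∘ₗ LinearMap.fst ℝ E E ∘ₗ Submodule.subtype _ }
  have hf : ∀ w : f.domain, f w ≤ 2 * ‖L‖ * ‖(w : E × E)⁺‖ := by
    rintro ⟨⟨u, v⟩, hw⟩
    obtain rfl : v = -u := hw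
    calc L u ≤ ‖L‖ * ‖u‖ := (le_abs_self _).trans (L.le_opNorm u)
      _ ≤ ‖L‖ * (2 * ‖(u, -u)⁺‖) :=
        mul_le_mul_of_nonneg_left (norm_le_two_mul_norm_posPart_prodMk_neg u) (norm_nonneg L)
      _ = 2 * ‖L‖ * ‖(u, -u)⁺‖ := by ring
  obtain ⟨R, hR⟩ := exists_positive_extension_of_le_mul_norm_posPart f (by positivity) hf
  refine ⟨.mk₀ (R.toLinearMap ∘ₗ LinearMap.inl ℝ E E) fun u hu => R.map_nonneg ⟨hu, le_rfl⟩,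
    .mk₀ (R.toLinearMap ∘ₗ LinearMap.inr ℝ E E) fun u hu => R.map_nonneg ⟨le_rfl, hu⟩,
    fun u => ?_⟩
  calc L u = R (u, -u) := (hR ⟨(u, -u), rfl⟩).symm
    _ = R ((u, 0) - (0, u)) := by simp
    _ = R (u, 0) - R (0, u) := map_sub R _ _

end NormedLattice

section SignedIntegral

variable {X E : Type*} [MeasurableSpace X] [NormedAddCommGroup E] [NormedSpace ℝ E]

/-- The integral of `f` against a signed measure, defined through the Jordan decomposition as in
`Discriminatory`. -/
noncomputable def signedIntegral (μ : SignedMeasure X) (f : X → E) : E :=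
  (∫ x, f x ∂μ.toJordanDecomposition.posPart) - ∫ x, f x ∂μ.toJordanDecomposition.negPart

lemma signedIntegral_zero (f : X → E) : signedIntegral 0 f = 0 := by
  simp [signedIntegral, SignedMeasure.toJordanDecomposition_zero]

lemma signedIntegral_toSignedMeasure_sub {μ ν : Measure X} [IsFiniteMeasure μ] [IsFiniteMeasure ν]
    {f : X → E} (hμ : Integrable f μ) (hν : Integrable f ν) :
    signedIntegral (μ.toSignedMeasure - ν.toSignedMeasure) f = (∫ x, f x ∂μ) - ∫ x, f x ∂ν := by
  have measure_eq : (μ - ν) + ν = μ + (ν - μ) := by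
    rw [← Measure.toSignedMeasure_eq_toSignedMeasure_iff, Measure.toSignedMeasure_add,
      Measure.toSignedMeasure_add, ← sub_eq_sub_iff_add_eq_add]
    exact Measure.sub_toSignedMeasure_eq_toSignedMeasure_sub.symm
  have integral_eq := congrArg (fun ρ => ∫ x, f x ∂ρ) measure_eq
  rw [integral_add_measure (hμ.mono_measure Measure.sub_le) hν,
    integral_add_measure hμ (hν.mono_measure Measure.sub_le)] at integral_eq
  rw [signedIntegral, Measure.toJordanDecomposition_toSignedMeasure_sub]
  exact sub_eq_sub_iff_add_eq_add.2 integral_eq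

end SignedIntegral

section RieszRepresentation

variable {X : Type*} [TopologicalSpace X] [CompactSpace X] [T2Space X] [MeasurableSpace X]
  [BorelSpace X]

lemma exists_measure_forall_eq_integral (P : C(X, ℝ) →ₚ[ℝ] ℝ) :
    ∃ μ : Measure X, IsFiniteMeasure μ ∧ ∀ u : C(X, ℝ), P u = ∫ x, u x ∂μ := by
  let Λ : CompactlySupportedContinuousMap X ℝ →ₚ[ℝ] ℝ :=
    { toFun u := P u.toContinuousMap
      map_add' u v := map_add P u.toContinuousMap v.toContinuousMap
      map_smul' c u := map_smul P c u.toContinuousMap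
      monotone' u v huv := P.monotone' (a := u.toContinuousMap) (b := v.toContinuousMap) huv }
  exact ⟨RealRMK.rieszMeasure Λ, inferInstance, fun u =>
    (RealRMK.integral_rieszMeasure Λ ⟨u, .of_compactSpace _⟩).symm⟩

lemma exists_signedMeasure_forall_eq_signedIntegral (L : StrongDual ℝ C(X, ℝ)) :
    ∃ μ : SignedMeasure X, ∀ u : C(X, ℝ), L u = signedIntegral μ u := by
  obtain ⟨P, Q, hL⟩ := exists_positive_sub_positive L
  obtain ⟨μ, _, hP⟩ := exists_measure_forall_eq_integral P
  obtain ⟨ν, _, hQ⟩ := exists_measure_forall_eq_integral Q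
  have integrable (u : C(X, ℝ)) (ρ : Measure X) [IsFiniteMeasure ρ] : Integrable u ρ :=
    u.continuous.integrable_of_hasCompactSupport (.of_compactSpace u)
  exact ⟨μ.toSignedMeasure - ν.toSignedMeasure, fun u => by
    rw [signedIntegral_toSignedMeasure_sub (integrable u μ) (integrable u ν), hL, hP, hQ]⟩

end RieszRepresentation

lemma dense_of_forall_dual_eq_zero {𝕜 E : Type*} [RCLike 𝕜] [SeminormedAddCommGroup E]
    [NormedSpace 𝕜 E] {S : Submodule 𝕜 E}
    (hS : ∀ L : StrongDual 𝕜 E, (∀ u ∈ S, L u = 0) → L = 0) : Dense (S : Set E) := by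
  rw [Submodule.dense_iff_topologicalClosure_eq_top, Submodule.eq_top_iff']
  intro u
  let π := S.topologicalClosure.mkQL
  have : IsClosed (S.topologicalClosure : Set E) := S.isClosed_topologicalClosure
  have π_eq_zero {v : E} : π v = 0 ↔ v ∈ S.topologicalClosure := Submodule.Quotient.mk_eq_zero _
  refine π_eq_zero.1 (SeparatingDual.eq_zero_of_forall_dual_eq_zero (R := 𝕜) fun ℓ => ?_)
  have comp_eq_zero : ℓ ∘L π = 0 := hS _ fun v hv => by
    rw [ContinuousLinearMap.comp_apply, π_eq_zero.2 (S.le_topologicalClosure hv), map_zero]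
  exact DFunLike.congr_fun comp_eq_zero u

lemma dense_of_forall_signedMeasure_eq_zero {X : Type*} [TopologicalSpace X] [CompactSpace X]
    [T2Space X] [MeasurableSpace X] [BorelSpace X] {S : Submodule ℝ C(X, ℝ)}
    (hS : ∀ μ : SignedMeasure X, (∀ u ∈ S, signedIntegral μ u = 0) → μ = 0) :
    Dense (S : Set C(X, ℝ)) := by
  refine dense_of_forall_dual_eq_zero fun L hL => ?_
  obtain ⟨μ, hμ⟩ := exists_signedMeasure_forall_eq_signedIntegral L
  have μ_eq_zero : μ = 0 := hS μ fun u hu => (hμ u).symm.trans (hL u hu)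
  ext u
  rw [hμ, μ_eq_zero, signedIntegral_zero, _root_.zero_apply]

section ShallowNetworks

variable {ι : Type*} [Fintype ι]

/-- The ridge function `x ↦ φ (yᵀx + θ)`: a single hidden neuron with activation `φ`, weight vector
`y` and bias `θ`. -/
def ridge (φ : C(ℝ, ℝ)) (y : ι → ℝ) (θ : ℝ) : C(ι → ℝ, ℝ) where
  toFun x := φ (y ⬝ᵥ x + θ)
  continuous_toFun :=
    φ.continuous.comp ((continuous_const.dotProduct continuous_id).add continuous_const)

/-- The functions on `K` computed by neural networks with a single hidden layer of arbitrary width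
and activation `φ`, as a subspace of `C(K, ℝ)`. -/
def shallowNetworks (φ : C(ℝ, ℝ)) (K : Set (ι → ℝ)) : Submodule ℝ C(K, ℝ) :=
  Submodule.span ℝ (Set.range fun p : (ι → ℝ) × ℝ => (ridge φ p.1 p.2).restrict K)

lemma restrict_ridge_mem_shallowNetworks (φ : C(ℝ, ℝ)) (K : Set (ι → ℝ)) (y : ι → ℝ) (θ : ℝ) :
    (ridge φ y θ).restrict K ∈ shallowNetworks φ K :=
  Submodule.subset_span ⟨(y, θ), rfl⟩

lemma mem_shallowNetworks {φ : C(ℝ, ℝ)} {K : Set (ι → ℝ)} {g : C(K, ℝ)} :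
    g ∈ shallowNetworks φ K ↔ ∃ (M : ℕ) (α θ : Fin M → ℝ) (y : Fin M → ι → ℝ),
      g = ∑ i, α i • (ridge φ (y i) (θ i)).restrict K := by
  constructor
  · intro hg
    obtain ⟨M, α, r, rfl⟩ := Submodule.mem_span_set'.1 hg
    choose p hp using fun i => (r i).2
    exact ⟨M, α, fun i => (p i).2, fun i => (p i).1, by simp only [hp]⟩
  · rintro ⟨M, α, θ, y, rfl⟩
    exact Submodule.sum_smul_mem _ α fun i _ => restrict_ridge_mem_shallowNetworks φ K (y i) (θ i)

end ShallowNetworks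

theorem Discriminatory.dense_shallowNetworks {N : ℕ} {φ : C(ℝ, ℝ)} {K : Set (Fin N → ℝ)}
    (hφ : Discriminatory φ K) (hK : IsCompact K) :
    Dense (shallowNetworks φ K : Set C(K, ℝ)) := by
  have : CompactSpace K := isCompact_iff_compactSpace.1 hK
  exact dense_of_forall_signedMeasure_eq_zero fun μ hμ => hφ μ inferInstance inferInstance
    fun y θ => hμ _ (restrict_ridge_mem_shallowNetworks φ K y θ)

/-- **Cybenko's universal approximation theorem.** If `φ` is a
continuous discriminatory function for the compact set `K ⊆ ℝ^N`, then
single-hidden-layer real-valued neural networks with activation `φ` are dense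
in `C(K)` with respect to the supremum norm. -/
theorem universal_approximation_real {N : ℕ} (K : Set (Fin N → ℝ))
    (hK : IsCompact K) (φ : ℝ → ℝ) (hφcont : Continuous φ)
    (hφdisc : Discriminatory φ K) (f : (Fin N → ℝ) → ℝ) (hf : ContinuousOn f K)
    (ε : ℝ) (hε : 0 < ε) :
    ∃ (M : ℕ) (α θ : Fin M → ℝ) (y : Fin M → Fin N → ℝ),
      ∀ x ∈ K, |f x - ∑ i : Fin M, α i * φ (y i ⬝ᵥ x + θ i)| < ε := by
  have : CompactSpace K := isCompact_iff_compactSpace.1 hK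
  let φ' : C(ℝ, ℝ) := ⟨φ, hφcont⟩
  let f' : C(K, ℝ) := ⟨K.domRestrict f, hf.domRestrict⟩
  have hφ' : Discriminatory φ' K := hφdisc
  obtain ⟨g, hg, hfg⟩ := (hφ'.dense_shallowNetworks hK).exists_dist_lt f' hε
  obtain ⟨M, α, θ, y, rfl⟩ := mem_shallowNetworks.1 hg
  refine ⟨M, α, θ, y, fun x hx => ?_⟩
  simpa [Real.dist_eq, f', φ', ridge] using (ContinuousMap.dist_lt_iff hε).1 hfg ⟨x, hx⟩
end

section
/- Every bounded, non-constant continuous function φ : ℝ → ℝ is discriminatory for every compact set K ⊆ ℝ^N; that is, for every finite signed regular Borel measure μ on K, if ∫_K φ(yᵀx + θ) dμ(x) = 0 for all y ∈ ℝ^N and all θ ∈ ℝ, then μ = 0. -/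
/-!
Let `X` be a linear functional on `ℝ^N` and let `P`, `Q` be the positive and negative parts of
`μ`. Both integrate every `φ (t * X + θ)` to the same value, and by Fubini so they do with
`φ` replaced by any mollification `ψ = ρ ⋆ φ`. Differentiating `n` times in `t` at `t = 0` gives
`ψ⁽ⁿ⁾(θ) * ∫ Xⁿ ∂P = ψ⁽ⁿ⁾(θ) * ∫ Xⁿ ∂Q`. If the moments differed, then `ψ⁽ⁿ⁾ = 0` for all
mollifications, so each would be a polynomial of degree less than `n`; these form a finite
dimensional, hence closed, space, and `φ` would be almost everywhere a polynomial as well. A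
bounded non-constant continuous function is not. (That non-polynomiality is what matters goes back
to Leshno, Lin, Pinkus and Schocken.)

The law of `X` under a compactly supported measure is determined by its moments, because its
moment generating function is entire, and a finite measure on `ℝ^N` is determined by the laws of
the linear functionals (Cramér–Wold). Hence `P = Q`, and `μ = 0`.
-/

open Matrix MeasureTheory

open Bornology ContinuousLinearMap Filter Polynomial ProbabilityTheory
open scoped Convolution Topology

section Polynomial

lemma exists_polynomial_of_iteratedDeriv_eq_zero {f : ℝ → ℝ} {n : ℕ} (hf : ContDiff ℝ n f)
    (h : ∀ x, iteratedDeriv n f x = 0) :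
    ∃ p : ℝ[X], p.degree < n ∧ ∀ x, f x = p.eval x := by
  cases n with
  | zero => exact ⟨0, by simp, by simpa using h⟩
  | succ n =>
    refine ⟨∑ k : Fin (n + 1), C ((k.val.factorial : ℝ)⁻¹ * iteratedDeriv k f 0) * X ^ k.val,
      degree_sum_fin_lt _, fun x => ?_⟩
    rcases eq_or_ne 0 x with rfl | hx
    · simp [Fin.sum_univ_succ, eval_finsetSum]
    · obtain ⟨y, -, hy⟩ := taylor_mean_remainder_lagrange_iteratedDeriv hx
        (hf.contDiffOn (s := Set.uIcc 0 x))
      rw [h, zero_mul, zero_div, sub_eq_zero] at hy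
      rw [hy, taylor_within_apply, Finset.sum_range, eval_finsetSum]
      refine Finset.sum_congr rfl fun k _ => ?_
      have hk : ContDiffAt ℝ k f 0 := (hf.of_le (by exact_mod_cast k.2.le)).contDiffAt
      rw [iteratedDerivWithin_eq_iteratedDeriv (uniqueDiffOn_uIcc hx) hk Set.left_mem_uIcc]
      simp only [eval_mul, eval_C, eval_pow, eval_X, sub_zero, smul_eq_mul]
      ring

lemma exists_polynomial_of_tendsto_eval {ι 𝕜 : Type*} [Field 𝕜] [TopologicalSpace 𝕜]
    [IsTopologicalRing 𝕜] [T2Space 𝕜] {l : Filter ι} [l.NeBot] {p : ι → 𝕜[X]} {n : ℕ}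
    (hp : ∀ i, (p i).degree < n) {S : Set 𝕜} (hS : S.Infinite) {f : 𝕜 → 𝕜}
    (hlim : ∀ x ∈ S, Tendsto (fun i => (p i).eval x) l (𝓝 (f x))) :
    ∃ q : 𝕜[X], ∀ x ∈ S, f x = q.eval x := by
  classical
  obtain ⟨t, htS, htn⟩ := hS.exists_subset_card_eq n
  refine ⟨Lagrange.interpolate t id f, fun x hx => tendsto_nhds_unique (hlim x hx) ?_⟩
  have hinterp (i : ι) : p i = Lagrange.interpolate t id fun y => (p i).eval y :=
    Lagrange.eq_interpolate (Set.injOn_id _) (htn ▸ hp i)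
  have heval (r : 𝕜 → 𝕜) : (Lagrange.interpolate t id r).eval x =
      ∑ y ∈ t, r y * (Lagrange.basis t id y).eval x := by
    simp [Lagrange.interpolate_apply, eval_finsetSum]
  simp only [heval, fun i => (congrArg (eval x) (hinterp i)).trans (heval _)]
  exact tendsto_finsetSum _ fun y hy => (hlim y (htS hy)).mul_const _

lemma not_ae_eq_polynomial_of_bounded_of_nonconst {φ : ℝ → ℝ} (hφ : Continuous φ)
    (hbdd : ∃ C, ∀ x, |φ x| ≤ C) (hne : ∃ a b, φ a ≠ φ b) (p : ℝ[X]) :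
    ¬ φ =ᵐ[volume] p.eval := by
  intro h
  obtain rfl : φ = p.eval := (hφ.ae_eq_iff_eq volume p.continuous).1 h
  obtain ⟨C, hC⟩ := hbdd
  have hdeg : p.degree ≤ 0 :=
    p.isBoundedUnder_abs_atTop_iff.1 (isBoundedUnder_of ⟨C, hC⟩)
  obtain ⟨a, b, hab⟩ := hne
  rw [eq_C_of_degree_le_zero hdeg] at hab
  simp at hab

end Polynomial

section Mollification

variable {φ : ℝ → ℝ}

lemma locallyIntegrable_of_isBounded_image (hφ : Measurable φ)
    (hφb : ∀ S, IsBounded S → IsBounded (φ '' S)) : LocallyIntegrable φ := by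
  refine (locallyIntegrable_iff).2 fun K hK => ?_
  obtain ⟨C, hC⟩ := (hφb K hK.isBounded).exists_norm_le
  refine .of_bound hK.measure_lt_top hφ.aestronglyMeasurable C ?_
  exact ae_restrict_of_forall_mem hK.measurableSet fun x hx => hC _ (Set.mem_image_of_mem φ hx)

lemma exists_polynomial_of_iteratedDeriv_convolution_eq_zero (hφ : LocallyIntegrable φ) {n : ℕ}
    (h : ∀ ρ : ℝ → ℝ, ContDiff ℝ n ρ → HasCompactSupport ρ →
      ∀ x, iteratedDeriv n (ρ ⋆[lsmul ℝ ℝ] φ) x = 0) :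
    ∃ p : ℝ[X], φ =ᵐ[volume] p.eval := by
  let B (i : ℕ) : ContDiffBump (0 : ℝ) :=
    ⟨1 / ((i : ℝ) + 1) / 2, 1 / ((i : ℝ) + 1), by positivity, half_lt_self (by positivity)⟩
  have hlim : ∀ᵐ x, Tendsto (fun i => ((B i).normed volume ⋆[lsmul ℝ ℝ] φ) x) atTop (𝓝 (φ x)) :=
    ContDiffBump.ae_convolution_tendsto_right_of_locallyIntegrable (K := 2)
      tendsto_one_div_add_atTop_nhds_zero_nat
      (.of_forall fun i => (mul_div_cancel₀ _ two_ne_zero).ge) hφ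
  have hpoly (i : ℕ) : ∃ p : ℝ[X], p.degree < n ∧
      ∀ x, ((B i).normed volume ⋆[lsmul ℝ ℝ] φ) x = p.eval x :=
    exists_polynomial_of_iteratedDeriv_eq_zero
      ((B i).hasCompactSupport_normed.contDiff_convolution_left _ (B i).contDiff_normed hφ)
      (h _ (B i).contDiff_normed (B i).hasCompactSupport_normed)
  choose p hdeg hp using hpoly
  simp only [hp] at hlim
  obtain ⟨q, hq⟩ := exists_polynomial_of_tendsto_eval hdeg
    (fun hfin => frequently_ae_iff.1 hlim.frequently (hfin.measure_zero _)) fun x hx => hx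
  exact ⟨q, hlim.mono hq⟩

end Mollification

section Moments

variable {Ω : Type*} [MeasurableSpace Ω] {P Q : Measure Ω} {X : Ω → ℝ}

lemma complexMGF_eq_tsum (h : integrableExpSet X P = Set.univ) (z : ℂ) :
    complexMGF X P z = ∑' n : ℕ, (n.factorial : ℂ)⁻¹ * (∫ ω, X ω ^ n ∂P : ℝ) * z ^ n := by
  have hdiff : Differentiable ℂ (complexMGF X P) := fun z =>
    (hasDerivAt_complexMGF (by simp [h])).differentiableAt
  rw [← Complex.taylorSeries_eq_of_entire' 0 z hdiff]
  simp [iteratedDeriv_complexMGF, h, ← integral_complex_ofReal]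

variable [IsFiniteMeasure P] [IsFiniteMeasure Q] {R : ℝ}

lemma integral_convolution_comp {ρ φ : ℝ → ℝ} (hρ : Continuous ρ) (hρc : HasCompactSupport ρ)
    (hφ : Measurable φ) (hφb : ∀ S, IsBounded S → IsBounded (φ '' S))
    (hX : Measurable X) (hXR : ∀ᵐ ω ∂P, |X ω| ≤ R) :
    ∫ ω, (ρ ⋆[lsmul ℝ ℝ] φ) (X ω) ∂P = ∫ u, ρ u * ∫ ω, φ (X ω - u) ∂P := by
  obtain ⟨r, hr⟩ := hρc.isBounded.exists_norm_le
  obtain ⟨M, hM⟩ := (hφb _ (Metric.isBounded_closedBall (x := 0) (r := R + r))).exists_norm_le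
  have hint : Integrable (fun z : Ω × ℝ => ρ z.2 * φ (X z.1 - z.2)) (P.prod volume) := by
    refine (((hρ.integrable_of_hasCompactSupport hρc).comp_snd P).norm.mul_const M).mono'
      (Measurable.aestronglyMeasurable (by have := hρ.measurable; fun_prop)) ?_
    filter_upwards [Measure.quasiMeasurePreserving_fst.ae hXR] with z hz
    rcases eq_or_ne (ρ z.2) 0 with h0 | h0
    · simp [h0]
    · rw [norm_mul]
      gcongr
      refine hM _ (Set.mem_image_of_mem φ (mem_closedBall_zero_iff.2 ?_))
      exact (norm_sub_le _ _).trans (add_le_add hz (hr _ (subset_tsupport ρ h0)))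
  simp only [convolution_def, lsmul_apply, smul_eq_mul]
  rw [integral_integral_swap hint]
  simp only [integral_const_mul]

lemma integrable_comp_of_ae_abs_le {f : ℝ → ℝ} (hf : Continuous f) (hX : Measurable X)
    (hXR : ∀ᵐ ω ∂P, |X ω| ≤ R) : Integrable (fun ω => f (X ω)) P := by
  obtain ⟨M, hM⟩ := (isCompact_closedBall (0 : ℝ) R).exists_bound_of_continuousOn hf.continuousOn
  exact .of_bound (hf.measurable.comp hX).aestronglyMeasurable M
    (hXR.mono fun ω hω => hM _ (mem_closedBall_zero_iff.2 hω))

lemma hasDerivAt_integral_comp_mul_add {f : ℝ → ℝ} (hf : ContDiff ℝ 1 f) (hX : Measurable X)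
    (hXR : ∀ᵐ ω ∂P, |X ω| ≤ R) (k : ℕ) (t θ : ℝ) :
    HasDerivAt (fun t => ∫ ω, f (t * X ω + θ) * X ω ^ k ∂P)
      (∫ ω, deriv f (t * X ω + θ) * X ω ^ (k + 1) ∂P) t := by
  have : Continuous (deriv f) := hf.continuous_deriv le_rfl
  obtain ⟨M, hM⟩ := ((isCompact_closedBall t 1).prod
    (isCompact_closedBall (0 : ℝ) R)).exists_bound_of_continuousOn
      (f := fun z => deriv f (z.1 * z.2 + θ) * z.2 ^ (k + 1)) (by fun_prop)
  have hint (t : ℝ) : Integrable (fun ω => f (t * X ω + θ) * X ω ^ k) P :=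
    integrable_comp_of_ae_abs_le (f := fun x => f (t * x + θ) * x ^ k)
      (by have := hf.continuous; fun_prop) hX hXR
  refine (hasDerivAt_integral_of_dominated_loc_of_deriv_le (bound := fun _ => M)
    (F' := fun t ω => deriv f (t * X ω + θ) * X ω ^ (k + 1))
    (Metric.closedBall_mem_nhds t one_pos) (.of_forall fun t => (hint t).aestronglyMeasurable)
    (hint t) (by fun_prop) ?_ (integrable_const M) (.of_forall fun ω t' _ => ?_)).2
  · exact hXR.mono fun ω hω t' ht' => hM (t', X ω) ⟨ht', mem_closedBall_zero_iff.2 hω⟩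
  · have haff : HasDerivAt (fun t => t * X ω + θ) (X ω) t' := by
      simpa using ((hasDerivAt_id t').mul_const (X ω)).add_const θ
    refine (((hf.differentiable one_ne_zero _).hasDerivAt.comp t' haff).mul_const _).congr_deriv ?_
    ring

lemma iteratedDeriv_integral_comp_mul_add {f : ℝ → ℝ} {n : ℕ} (hf : ContDiff ℝ n f)
    (hX : Measurable X) (hXR : ∀ᵐ ω ∂P, |X ω| ≤ R) (θ : ℝ) :
    iteratedDeriv n (fun t => ∫ ω, f (t * X ω + θ) ∂P) =
      fun t => ∫ ω, iteratedDeriv n f (t * X ω + θ) * X ω ^ n ∂P := by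
  induction n with
  | zero => simp
  | succ n ih =>
    have hfn : ContDiff ℝ 1 (iteratedDeriv n f) := by
      rw [iteratedDeriv_eq_iterate]
      exact .iterate_deriv' 1 n (by rwa [add_comm])
    rw [iteratedDeriv_succ, ih (hf.of_le (by simp)), iteratedDeriv_succ]
    exact funext fun t => (hasDerivAt_integral_comp_mul_add hfn hX hXR n t θ).deriv

lemma integral_pow_eq_of_integral_ridge_eq {φ : ℝ → ℝ} (hφ : Measurable φ)
    (hφb : ∀ S, IsBounded S → IsBounded (φ '' S)) (hφp : ∀ p : ℝ[X], ¬ φ =ᵐ[volume] p.eval)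
    (hX : Measurable X) (hP : ∀ᵐ ω ∂P, |X ω| ≤ R) (hQ : ∀ᵐ ω ∂Q, |X ω| ≤ R)
    (h : ∀ t θ, ∫ ω, φ (t * X ω + θ) ∂P = ∫ ω, φ (t * X ω + θ) ∂Q) (n : ℕ) :
    ∫ ω, X ω ^ n ∂P = ∫ ω, X ω ^ n ∂Q := by
  have hφi := locallyIntegrable_of_isBounded_image hφ hφb
  obtain ⟨ρ, hρ, hρc, θ, hθ⟩ : ∃ ρ : ℝ → ℝ, ContDiff ℝ n ρ ∧ HasCompactSupport ρ ∧
      ∃ θ, iteratedDeriv n (ρ ⋆[lsmul ℝ ℝ] φ) θ ≠ 0 := by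
    by_contra! hzero
    obtain ⟨p, hp⟩ := exists_polynomial_of_iteratedDeriv_convolution_eq_zero hφi hzero
    exact hφp p hp
  have hsmooth : ContDiff ℝ n (ρ ⋆[lsmul ℝ ℝ] φ) :=
    hρc.contDiff_convolution_left _ hρ hφi
  have hψ (t : ℝ) : ∫ ω, (ρ ⋆[lsmul ℝ ℝ] φ) (t * X ω + θ) ∂P =
      ∫ ω, (ρ ⋆[lsmul ℝ ℝ] φ) (t * X ω + θ) ∂Q := by
    have hbound {ω : Ω} (hω : |X ω| ≤ R) : |t * X ω + θ| ≤ |t| * R + |θ| :=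
      (abs_add_le _ _).trans (by rw [abs_mul]; gcongr)
    have hmeas : Measurable fun ω => t * X ω + θ := by fun_prop
    rw [integral_convolution_comp hρ.continuous hρc hφ hφb hmeas (hP.mono fun _ => hbound),
      integral_convolution_comp hρ.continuous hρc hφ hφb hmeas (hQ.mono fun _ => hbound)]
    simp only [add_sub_assoc, h]
  have hderiv := congrFun (congrArg (iteratedDeriv n) (funext hψ)) 0
  rw [iteratedDeriv_integral_comp_mul_add hsmooth hX hP,
    iteratedDeriv_integral_comp_mul_add hsmooth hX hQ] at hderiv
  simp only [zero_mul, zero_add, integral_const_mul] at hderiv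
  exact mul_left_cancel₀ hθ hderiv

lemma integrableExpSet_eq_univ_of_ae_abs_le (hX : Measurable X) (hXR : ∀ᵐ ω ∂P, |X ω| ≤ R) :
    integrableExpSet X P = Set.univ :=
  Set.eq_univ_of_forall fun t =>
    integrable_comp_of_ae_abs_le (f := fun x => Real.exp (t * x)) (by fun_prop) hX hXR

lemma map_eq_of_integral_pow_eq (hX : Measurable X) (hP : integrableExpSet X P = Set.univ)
    (hQ : integrableExpSet X Q = Set.univ) (h : ∀ n : ℕ, ∫ ω, X ω ^ n ∂P = ∫ ω, X ω ^ n ∂Q) :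
    P.map X = Q.map X :=
  Measure.ext_of_complexMGF_eq hX.aemeasurable hX.aemeasurable <| funext fun z => by
    rw [complexMGF_eq_tsum hP, complexMGF_eq_tsum hQ]
    simp only [h]

end Moments

section Ridge

variable {E : Type*} [NormedAddCommGroup E] [NormedSpace ℝ E] [CompleteSpace E]
  [SecondCountableTopology E] [MeasurableSpace E] [BorelSpace E]
  {P Q : Measure E} [IsFiniteMeasure P] [IsFiniteMeasure Q]

lemma measure_eq_of_map_dual_eq (h : ∀ L : StrongDual ℝ E, P.map L = Q.map L) : P = Q :=
  Measure.ext_of_charFunDual <| funext fun L => by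
    rw [charFunDual_eq_charFun_map_one, charFunDual_eq_charFun_map_one, h]

lemma measure_eq_of_integral_ridge_eq {φ : ℝ → ℝ} (hφ : Measurable φ)
    (hφb : ∀ S, IsBounded S → IsBounded (φ '' S)) (hφp : ∀ p : ℝ[X], ¬ φ =ᵐ[volume] p.eval)
    {R : ℝ} (hP : ∀ᵐ x ∂P, ‖x‖ ≤ R) (hQ : ∀ᵐ x ∂Q, ‖x‖ ≤ R)
    (h : ∀ (L : StrongDual ℝ E) (θ : ℝ), ∫ x, φ (L x + θ) ∂P = ∫ x, φ (L x + θ) ∂Q) : P = Q := by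
  refine measure_eq_of_map_dual_eq fun L => ?_
  have hL : Measurable L := L.continuous.measurable
  have hPL : ∀ᵐ x ∂P, |L x| ≤ ‖L‖ * R := hP.mono fun x hx => L.le_opNorm_of_le hx
  have hQL : ∀ᵐ x ∂Q, |L x| ≤ ‖L‖ * R := hQ.mono fun x hx => L.le_opNorm_of_le hx
  refine map_eq_of_integral_pow_eq hL (integrableExpSet_eq_univ_of_ae_abs_le hL hPL)
    (integrableExpSet_eq_univ_of_ae_abs_le hL hQL) ?_
  exact integral_pow_eq_of_integral_ridge_eq hφ hφb hφp hL hPL hQL fun t θ => h (t • L) θ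

end Ridge

lemma signedMeasure_eq_zero_of_posPart_eq_negPart {α : Type*} [MeasurableSpace α]
    {μ : SignedMeasure α}
    (h : μ.toJordanDecomposition.posPart = μ.toJordanDecomposition.negPart) : μ = 0 := by
  rw [← μ.toSignedMeasure_toJordanDecomposition, JordanDecomposition.toSignedMeasure]
  simp only [h, sub_self]

theorem bounded_nonconstant_is_discriminatory_general {φ : ℝ → ℝ} (hφ : Measurable φ)
    (hφb : ∀ S, IsBounded S → IsBounded (φ '' S)) (hφp : ∀ p : ℝ[X], ¬ φ =ᵐ[volume] p.eval)
    {N : ℕ} {K : Set (Fin N → ℝ)} (hK : IsBounded K) : Discriminatory φ K := by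
  intro μ _ _ h
  have hval : Measurable ((↑) : K → Fin N → ℝ) := measurable_subtype_coe
  obtain ⟨R, hR⟩ := hK.exists_norm_le
  have hbound (P : Measure K) : ∀ᵐ x ∂P.map ((↑) : K → Fin N → ℝ), ‖x‖ ≤ R :=
    (ae_map_iff hval.aemeasurable (measurable_norm measurableSet_Iic)).2
      (.of_forall fun x => hR x x.2)
  have hmap : μ.toJordanDecomposition.posPart.map ((↑) : K → Fin N → ℝ) =
      μ.toJordanDecomposition.negPart.map (↑) := by
    refine measure_eq_of_integral_ridge_eq hφ hφb hφp (hbound _) (hbound _) fun L θ => ?_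
    have hmeas : Measurable fun x : Fin N → ℝ => φ (L x + θ) := by fun_prop
    obtain ⟨y, hy⟩ := (dotProductEquiv ℝ (Fin N)).surjective L.toLinearMap
    have hLy (x : Fin N → ℝ) : L x = y ⬝ᵥ x := (DFunLike.congr_fun hy x).symm
    rw [integral_map hval.aemeasurable hmeas.aestronglyMeasurable,
      integral_map hval.aemeasurable hmeas.aestronglyMeasurable]
    simpa only [hLy] using sub_eq_zero.1 (h y θ)
  refine signedMeasure_eq_zero_of_posPart_eq_negPart (Measure.ext ?_)
  rintro _ ⟨S, hS, rfl⟩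
  rw [← Measure.map_apply hval hS, hmap, Measure.map_apply hval hS]

/-- **Hornik.** Every bounded, non-constant continuous function
`φ : ℝ → ℝ` is discriminatory for every compact set `K ⊆ ℝ^N`. -/
theorem bounded_nonconstant_is_discriminatory (φ : ℝ → ℝ)
    (hbdd : ∃ C : ℝ, ∀ x : ℝ, |φ x| ≤ C)
    (hnonconst : ∃ a b : ℝ, φ a ≠ φ b)
    (hcont : Continuous φ)
    {N : ℕ} (K : Set (Fin N → ℝ)) (hK : IsCompact K) :
    Discriminatory φ K := by
  have hrange : IsBounded (Set.range φ) := by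
    obtain ⟨C, hC⟩ := hbdd
    exact isBounded_iff_forall_norm_le.2 ⟨C, Set.forall_mem_range.2 hC⟩
  exact bounded_nonconstant_is_discriminatory_general hcont.measurable
    (fun _ _ => hrange.subset (Set.image_subset_range _ _))
    (not_ae_eq_polynomial_of_bounded_of_nonconst hcont hbdd hnonconst) hK.isBounded
end
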